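/- Let B ⊆ {1, …, d} be a subset with |B| = n + 1 such that the degree-1 forms {ℓᵢ : i ∈ B} are linearly independent. Then for every nonzero v ∈ K^{n+1}, the product ∏_{i ∉ B} ℓᵢ lies in I_v^{nl_v}. (This is the key estimate showing that each term of Warren's triangulation formula for the adjoint vanishes at every point at least to the order given by the nullity of the flat of hyperplanes through that point.) -/

import Mathlib

open MvPolynomial Finset Classical

noncomputable section

/-- The flat `F_v = {i | ℓᵢ(v) = 0}` of all hyperplanes through `v`. -/
def flatOf {K : Type*} [Field K] {n d : ℕ} (ℓ : Fin d → MvPolynomial (Fin (n + 1)) K)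
    (v : Fin (n + 1) → K) : Finset (Fin d) :=
  Finset.univ.filter fun i => eval v (ℓ i) = 0

/-- The rank `r_v`: the dimension of the linear span of `{ℓᵢ : i ∈ F_v}`. -/
def rkOf {K : Type*} [Field K] {n d : ℕ} (ℓ : Fin d → MvPolynomial (Fin (n + 1)) K)
    (v : Fin (n + 1) → K) : ℕ :=
  Module.finrank K (Submodule.span K (ℓ '' (flatOf ℓ v : Set (Fin d))))

/-- The nullity `nl_v = |F_v| − r_v` of the flat `F_v`. -/
def nlOf {K : Type*} [Field K] {n d : ℕ} (ℓ : Fin d → MvPolynomial (Fin (n + 1)) K)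
    (v : Fin (n + 1) → K) : ℕ :=
  (flatOf ℓ v).card - rkOf ℓ v

/-- The ideal `I_v` generated by all homogeneous degree-1 polynomials vanishing at `v`. -/
def pointIdeal {K : Type*} [Field K] {n : ℕ} (v : Fin (n + 1) → K) :
    Ideal (MvPolynomial (Fin (n + 1)) K) :=
  Ideal.span {p | p.IsHomogeneous 1 ∧ eval v p = 0}

section

variable {R M ι : Type*} [Semiring R] [StrongRankCondition R] [AddCommMonoid M] [Module R M]
  {a : ι → M} {F C B : Finset ι}

lemma card_le_finrank_span_image (hindep : LinearIndepOn R a C) (hCF : C ⊆ F) :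
    #C ≤ Module.finrank R (Submodule.span R (a '' F)) := by
  have : Module.Finite R (Submodule.span R (a '' F)) :=
    .span_of_finite R (F.finite_toSet.image a)
  have hmem (i : C) : a i ∈ Submodule.span R (a '' F) :=
    Submodule.subset_span (Set.mem_image_of_mem a (hCF i.2))
  have hindep_span : LinearIndependent R fun i : C ↦
      (⟨a i, hmem i⟩ : Submodule.span R (a '' F)) :=
    .of_comp (Submodule.subtype _) hindep
  simpa only [Fintype.card_coe] using hindep_span.fintype_card_le_finrank

lemma card_sub_finrank_span_image_le_card_sdiff [DecidableEq ι] (hindep : LinearIndepOn R a B) :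
    #F - Module.finrank R (Submodule.span R (a '' F)) ≤ #(F \ B) := by
  have hrank : #(F ∩ B) ≤ Module.finrank R (Submodule.span R (a '' F)) :=
    card_le_finrank_span_image (hindep.mono (coe_subset.2 inter_subset_right)) inter_subset_left
  have hcard : #(F \ B) + #(F ∩ B) = #F := card_sdiff_add_card_inter F B
  omega

end

lemma prod_mem_ideal_pow_of_le_card {A ι : Type*} [CommSemiring A] {I : Ideal A} {a : ι → A}
    {S T : Finset ι} {k : ℕ} (hST : S ⊆ T) (ha : ∀ i ∈ S, a i ∈ I) (hk : k ≤ #S) :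
    ∏ i ∈ T, a i ∈ I ^ k := by
  have hS : ∏ i ∈ S, a i ∈ I ^ #S := by
    simpa only [prod_const] using Ideal.prod_mem_prod ha
  exact Ideal.mem_of_dvd _ (prod_dvd_prod_of_subset S T a hST) (Ideal.pow_le_pow_right hk hS)

lemma mem_pointIdeal_of_mem_flatOf {K : Type*} [Field K] {n d : ℕ}
    {ℓ : Fin d → MvPolynomial (Fin (n + 1)) K} {v : Fin (n + 1) → K} {i : Fin d}
    (hhom : (ℓ i).IsHomogeneous 1) (hi : i ∈ flatOf ℓ v) : ℓ i ∈ pointIdeal v :=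
  Ideal.subset_span ⟨hhom, (mem_filter.1 hi).2⟩

/-- At most `rank F` of the indices in `F` can lie in `B`, so at least `#F - rank F` factors of the
product have their index in `F` and therefore lie in `I`. -/
theorem simplex_term_vanishing_general {R A ι : Type*} [Semiring R] [StrongRankCondition R]
    [CommSemiring A] [Module R A] [Fintype ι] [DecidableEq ι] {I : Ideal A} {a : ι → A}
    {F B : Finset ι} (hindep : LinearIndepOn R a B) (hmem : ∀ i ∈ F \ B, a i ∈ I) :
    ∏ i ∈ Bᶜ, a i ∈ I ^ (#F - Module.finrank R (Submodule.span R (a '' F))) :=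
  prod_mem_ideal_pow_of_le_card (fun _ hi ↦ mem_compl.2 (mem_sdiff.1 hi).2) hmem
    (card_sub_finrank_span_image_le_card_sdiff hindep)

/-- Let `B ⊆ {1, …, d}` with `|B| = n + 1` be such that `{ℓᵢ : i ∈ B}` is
linearly independent. Then for every nonzero `v ∈ K^{n+1}` the product `∏_{i ∉ B} ℓᵢ` lies
in `I_v^{nl_v}`. -/
theorem simplex_term_vanishing {K : Type*} [Field K] {n d : ℕ}
    (ℓ : Fin d → MvPolynomial (Fin (n + 1)) K)
    (hhom : ∀ i, (ℓ i).IsHomogeneous 1)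
    (B : Finset (Fin d)) (hB : B.card = n + 1)
    (hindep : LinearIndependent K (fun i : B => ℓ i))
    (v : Fin (n + 1) → K) (hv : v ≠ 0) :
    (∏ i ∈ Bᶜ, ℓ i) ∈ pointIdeal v ^ nlOf ℓ v :=
  simplex_term_vanishing_general hindep fun i hi ↦
    mem_pointIdeal_of_mem_flatOf (hhom i) (mem_sdiff.1 hi).1

end
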